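/- arXiv:2303.03085 — 3 statements merged into one kernel-verified Lean document; each statement's English description precedes it below -/
import Mathlib

section
/- Discrete volume-difference identity (Lemma 3.1 of the paper). Let X⁰, X¹ : [0,1] → ℝ² be continuous, piecewise C¹ curves whose first components vanish at the endpoints, i.e. X⁰(α)·e₁ = X¹(α)·e₁ = 0 for α ∈ {0,1}. Then M(X¹) − M(X⁰) = 2π ∫₀¹ (X¹(α) − X⁰(α)) · f(α) dα. -/
/-
Discrete volume-difference identity (Lemma 3.1).
M(X¹) − M(X⁰) = 2π ∫₀¹ (X¹ − X⁰) · f dα, where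
M(X) := −π ∫₀¹ (X·e₁)² (X_α·e₂) dα and
f := −(1/6)[(X⁰·e₁)X⁰_α + 4(X^{1/2}·e₁)X^{1/2}_α + (X¹·e₁)X¹_α]^⊥.
-/

/-!
The segment from `X⁰(α)` to `X¹(α)` sweeps out a conical frustum of signed volume `V(α)`. Writing
`X⁰ = (a, u)` and `X¹ = (b, v)`, one has `V = (π/3) (v - u) (a² + ab + b²)`, while the weights
`1, 4, 1` reduce the bracket in `f` to `(2a + b) X⁰_α + (a + 2b) X¹_α`, whose first component is
`(a² + ab + b²)_α`. Hence, away from the breakpoints,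
`V_α = 2π (X¹ - X⁰) · f + π (b² v_α - a² u_α)`, and integrating gives
`M(X¹) - M(X⁰) = 2π ∫ (X¹ - X⁰) · f - (V(1) - V(0))`. On the axis the frustum degenerates, so the
end terms vanish there.
-/

open MeasureTheory Set

noncomputable section

/-- Euclidean dot product on ℝ². -/
def dot (v w : ℝ × ℝ) : ℝ := v.1 * w.1 + v.2 * w.2

/-- Clockwise rotation by π/2: (v₁,v₂) ↦ (v₂,−v₁). -/
def perp (v : ℝ × ℝ) : ℝ × ℝ := (v.2, -v.1)

/-- `X` is a continuous, piecewise `C¹` curve on `[0,1]` with derivative `X'`. -/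
structure PiecewiseC1 (X X' : ℝ → ℝ × ℝ) : Prop where
  cont : ContinuousOn X (Set.Icc 0 1)
  hasDeriv : ∃ s : Finset ℝ, ∀ α ∈ Set.Icc (0:ℝ) 1 \ (s : Set ℝ), HasDerivAt X (X' α) α
  bdd : ∃ C : ℝ, ∀ α ∈ Set.Icc (0:ℝ) 1, ‖X' α‖ ≤ C
  integrable : IntervalIntegrable X' MeasureTheory.volume 0 1

/-- Enclosed volume of the surface of revolution generated by the curve `X`
(with derivative `X'`) about the second coordinate axis. -/
def Mvol (X X' : ℝ → ℝ × ℝ) : ℝ :=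
  -Real.pi * ∫ α in (0:ℝ)..1, ((X α).1) ^ 2 * (X' α).2

/-- The time-weighted discrete normal `f` built from two curves. -/
def fwt (X0 X0' X1 X1' : ℝ → ℝ × ℝ) (α : ℝ) : ℝ × ℝ :=
  (-(1 / 6 : ℝ)) • perp
    ((X0 α).1 • X0' α
      + (4 : ℝ) • ((((1 / 2 : ℝ) • (X0 α + X1 α)).1) • ((1 / 2 : ℝ) • (X0' α + X1' α)))
      + (X1 α).1 • X1' α)

/-- `F` is a primitive of `f` between `a` and `b` in the sense needed for the fundamental theorem of
calculus. Countably many points without a derivative are allowed, which covers the breakpoints of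
piecewise `C¹` curves. -/
structure IsPrimitiveOn {E : Type*} [NormedAddCommGroup E] [NormedSpace ℝ E]
    (F f : ℝ → E) (a b : ℝ) : Prop where
  continuousOn : ContinuousOn F (uIcc a b)
  hasDerivAt_off_countable : ∃ s : Set ℝ, s.Countable ∧
    ∀ x ∈ Ioo (min a b) (max a b) \ s, HasDerivAt F (f x) x
  intervalIntegrable : IntervalIntegrable f volume a b

section

variable {E G : Type*} [NormedAddCommGroup E] [NormedSpace ℝ E]
  [NormedAddCommGroup G] [NormedSpace ℝ G] {a b : ℝ}

theorem intervalIntegrable_clm_apply {L : ℝ → E →L[ℝ] G} {f : ℝ → E}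
    (hL : ContinuousOn L (uIcc a b)) (hf : IntervalIntegrable f volume a b) :
    IntervalIntegrable (fun x => L x (f x)) volume a b := by
  obtain ⟨C, hC⟩ := isCompact_uIcc.exists_bound_of_continuousOn hL
  rw [intervalIntegrable_iff] at hf ⊢
  refine (ContinuousLinearMap.id ℝ (E →L[ℝ] G)).integrable_of_bilin_of_bdd_left C
    ((hL.mono uIoc_subset_uIcc).aestronglyMeasurable measurableSet_uIoc) ?_ hf
  exact ae_restrict_of_forall_mem measurableSet_uIoc fun x hx => hC x (uIoc_subset_uIcc hx)

namespace IsPrimitiveOn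

theorem integral_eq_sub [CompleteSpace E] {F f : ℝ → E} (h : IsPrimitiveOn F f a b) :
    ∫ x in a..b, f x = F b - F a := by
  obtain ⟨s, hs, hderiv⟩ := h.hasDerivAt_off_countable
  exact integral_eq_of_hasDerivAt_off_countable F f hs h.continuousOn hderiv h.intervalIntegrable

theorem prodMk {F f : ℝ → E} {H h : ℝ → G} (hF : IsPrimitiveOn F f a b)
    (hH : IsPrimitiveOn H h a b) :
    IsPrimitiveOn (fun x => (F x, H x)) (fun x => (f x, h x)) a b where
  continuousOn := hF.continuousOn.prodMk hH.continuousOn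
  hasDerivAt_off_countable := by
    obtain ⟨s, hs, hFderiv⟩ := hF.hasDerivAt_off_countable
    obtain ⟨t, ht, hHderiv⟩ := hH.hasDerivAt_off_countable
    refine ⟨s ∪ t, hs.union ht, fun x ⟨hx, hxst⟩ => ?_⟩
    rw [mem_union, not_or] at hxst
    exact (hFderiv x ⟨hx, hxst.1⟩).prodMk (hHderiv x ⟨hx, hxst.2⟩)
  intervalIntegrable :=
    ⟨hF.intervalIntegrable.1.prodMk hH.intervalIntegrable.1,
      hF.intervalIntegrable.2.prodMk hH.intervalIntegrable.2⟩

theorem contDiff_comp {φ : E → G} {F f : ℝ → E} (hφ : ContDiff ℝ 1 φ)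
    (h : IsPrimitiveOn F f a b) :
    IsPrimitiveOn (fun x => φ (F x)) (fun x => fderiv ℝ φ (F x) (f x)) a b where
  continuousOn := hφ.continuous.comp_continuousOn h.continuousOn
  hasDerivAt_off_countable := by
    obtain ⟨s, hs, hderiv⟩ := h.hasDerivAt_off_countable
    exact ⟨s, hs, fun x hx =>
      (hφ.differentiable one_ne_zero (F x)).hasFDerivAt.comp_hasDerivAt x (hderiv x hx)⟩
  intervalIntegrable := intervalIntegrable_clm_apply
    ((hφ.continuous_fderiv one_ne_zero).comp_continuousOn h.continuousOn) h.intervalIntegrable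

theorem intervalIntegrable_sq_fst_mul_snd {X X' : ℝ → ℝ × ℝ} (h : IsPrimitiveOn X X' a b) :
    IntervalIntegrable (fun α => (X α).1 ^ 2 * (X' α).2) volume a b := by
  have hsnd : IntervalIntegrable (fun α => (X' α).2) volume a b :=
    ⟨h.intervalIntegrable.1.snd, h.intervalIntegrable.2.snd⟩
  exact hsnd.continuousOn_mul (h.continuousOn.fst.pow 2)

end IsPrimitiveOn

end

theorem PiecewiseC1.isPrimitiveOn {X X' : ℝ → ℝ × ℝ} (h : PiecewiseC1 X X') :
    IsPrimitiveOn X X' 0 1 where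
  continuousOn := by simpa only [uIcc_of_le zero_le_one] using h.cont
  hasDerivAt_off_countable := by
    obtain ⟨s, hderiv⟩ := h.hasDeriv
    rw [min_eq_left zero_le_one, max_eq_right zero_le_one]
    exact ⟨s, s.countable_toSet, fun α hα => hderiv α ⟨Ioo_subset_Icc_self hα.1, hα.2⟩⟩
  intervalIntegrable := h.integrable

/-- Signed volume of the conical frustum generated by rotating the segment from `z.1` to `z.2` about
the second coordinate axis; it is positive when `z.2` lies above `z.1`. Both endpoints are bundled
into one argument so that the chain rule applies to a pair of curves. -/
def frustumVol (z : (ℝ × ℝ) × (ℝ × ℝ)) : ℝ :=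
  Real.pi / 3 * ((z.2.2 - z.1.2) * (z.1.1 ^ 2 + z.1.1 * z.2.1 + z.2.1 ^ 2))

theorem contDiff_frustumVol {n : WithTop ℕ∞} : ContDiff ℝ n frustumVol := by
  unfold frustumVol
  fun_prop

theorem frustumVol_eq_zero_of_fst_eq_zero {p q : ℝ × ℝ} (hp : p.1 = 0) (hq : q.1 = 0) :
    frustumVol (p, q) = 0 := by
  simp [frustumVol, hp, hq]

theorem fderiv_frustumVol_apply (p q p' q' : ℝ × ℝ) :
    fderiv ℝ frustumVol (p, q) (p', q') =
      Real.pi / 3 * ((q'.2 - p'.2) * (p.1 ^ 2 + p.1 * q.1 + q.1 ^ 2) +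
        (q.2 - p.2) * ((2 * p.1 + q.1) * p'.1 + (p.1 + 2 * q.1) * q'.1)) := by
  have hp : HasFDerivAt Prod.fst _ (p, q) := hasFDerivAt_fst (𝕜 := ℝ)
  have hq : HasFDerivAt Prod.snd _ (p, q) := hasFDerivAt_snd (𝕜 := ℝ)
  have hradii := ((hp.fst.pow 2).add (hp.fst.mul hq.fst)).add (hq.fst.pow 2)
  have hvol : HasFDerivAt frustumVol _ (p, q) :=
    ((hq.snd.sub hp.snd).mul hradii).const_mul (Real.pi / 3)
  rw [hvol.fderiv]
  simp only [Pi.add_apply, Pi.sub_apply, Pi.mul_apply, add_apply, sub_apply, smul_apply, smul_add,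
    smul_eq_mul, nsmul_eq_mul, Nat.cast_ofNat, Nat.add_one_sub_one, pow_one,
    ContinuousLinearMap.comp_apply, ContinuousLinearMap.coe_fst', ContinuousLinearMap.coe_snd']
  ring

theorem fwt_eq_smul_perp (X0 X0' X1 X1' : ℝ → ℝ × ℝ) (α : ℝ) :
    fwt X0 X0' X1 X1' α = (-(1 / 6 : ℝ)) • perp
      ((2 * (X0 α).1 + (X1 α).1) • X0' α + ((X0 α).1 + 2 * (X1 α).1) • X1' α) := by
  rw [fwt, Prod.smul_fst, Prod.fst_add, smul_eq_mul]
  congr 2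
  module

theorem fderiv_frustumVol_eq_dot_fwt (X0 X0' X1 X1' : ℝ → ℝ × ℝ) (α : ℝ) :
    fderiv ℝ frustumVol (X0 α, X1 α) (X0' α, X1' α) =
      2 * Real.pi * dot (X1 α - X0 α) (fwt X0 X0' X1 X1' α) +
        Real.pi * ((X1 α).1 ^ 2 * (X1' α).2 - (X0 α).1 ^ 2 * (X0' α).2) := by
  rw [fderiv_frustumVol_apply, fwt_eq_smul_perp]
  simp only [dot, perp, Prod.fst_add, Prod.snd_add, Prod.smul_fst, Prod.smul_snd,
    Prod.fst_sub, Prod.snd_sub, smul_eq_mul]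
  ring

theorem discrete_volume_difference_general {X0 X0' X1 X1' : ℝ → ℝ × ℝ}
    (h0 : IsPrimitiveOn X0 X0' 0 1) (h1 : IsPrimitiveOn X1 X1' 0 1) :
    Mvol X1 X1' - Mvol X0 X0' =
      2 * Real.pi * (∫ α in (0:ℝ)..1, dot (X1 α - X0 α) (fwt X0 X0' X1 X1' α)) -
        (frustumVol (X0 1, X1 1) - frustumVol (X0 0, X1 0)) := by
  have hV := (h0.prodMk h1).contDiff_comp contDiff_frustumVol
  have hM0 := h0.intervalIntegrable_sq_fst_mul_snd
  have hM1 := h1.intervalIntegrable_sq_fst_mul_snd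
  have hdot (α : ℝ) : 2 * Real.pi * dot (X1 α - X0 α) (fwt X0 X0' X1 X1' α) =
      fderiv ℝ frustumVol (X0 α, X1 α) (X0' α, X1' α) -
        Real.pi * ((X1 α).1 ^ 2 * (X1' α).2 - (X0 α).1 ^ 2 * (X0' α).2) :=
    eq_sub_of_add_eq (fderiv_frustumVol_eq_dot_fwt X0 X0' X1 X1' α).symm
  rw [← intervalIntegral.integral_const_mul]
  simp only [hdot]
  rw [intervalIntegral.integral_sub hV.intervalIntegrable ((hM1.sub hM0).const_mul _),
    hV.integral_eq_sub, intervalIntegral.integral_const_mul,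
    intervalIntegral.integral_sub hM1 hM0, Mvol, Mvol]
  ring

theorem discrete_volume_difference
    (X0 X0' X1 X1' : ℝ → ℝ × ℝ)
    (h0 : PiecewiseC1 X0 X0') (h1 : PiecewiseC1 X1 X1')
    (hend : ∀ α ∈ ({0, 1} : Set ℝ), (X0 α).1 = 0 ∧ (X1 α).1 = 0) :
    Mvol X1 X1' - Mvol X0 X0' =
      2 * Real.pi * ∫ α in (0:ℝ)..1, dot (X1 α - X0 α) (fwt X0 X0' X1 X1' α) := by
  obtain ⟨h00, h10⟩ := hend 0 (by simp)
  obtain ⟨h01, h11⟩ := hend 1 (by simp)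
  rw [discrete_volume_difference_general h0.isPrimitiveOn h1.isPrimitiveOn,
    frustumVol_eq_zero_of_fst_eq_zero h00 h10, frustumVol_eq_zero_of_fst_eq_zero h01 h11,
    sub_zero, sub_zero]
end
end

section
/- Unconditional energy stability, local estimate (Theorem 4.1, estimate (4.10), with the quadratures realized as exact weighted integrals; the skew-symmetrized convection term 𝒜(ρ, Û; U, U) is omitted since it vanishes identically when the two last arguments coincide). Let R ⊆ [0,∞)×ℝ be measurable (first coordinate r), let ρ, ρ̂, μ : R → [0,∞) be measurable, let γ > 0, Δt > 0 and g : R → ℝ². Let U, Û : R → ℝ² with U weakly differentiable, let P : R → ℝ, let X⁰, X¹ : [0,1] → ℝ² be continuous, piecewise C¹ with X⁰·e₁ ≥ 0 everywhere and X⁰_α ≠ 0 wherever defined, let κ : [0,1] → ℝ, and let v : [0,1] → ℝ² (representing the trace of U along the curve X⁰). Set ν⁰|X⁰_α| := −(X⁰_α)^⊥ and assume all integrals below are finite. Assume: (i) (1/(2Δt)) ∫_R r[(ρU − ρ̂Û)·U + ρ̂(U − Û)·U] + 2∫_R μ r |D_c(U)|² + 2∫_R μ r^{−1} (U·e₁)²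 − ∫_R P ∇_c·(rU) − γ ∫₀¹ (X⁰·e₁) κ (v·ν⁰) |X⁰_α| dα = ∫_R ρ r g·U; (ii) ∫_R P ∇_c·(rU) = 0; (iii) ∫₀¹ (X⁰·e₁) κ ((X¹ − X⁰)·ν⁰) |X⁰_α| dα = Δt ∫₀¹ (X⁰·e₁) κ (v·ν⁰) |X⁰_α| dα; (iv) ∫₀¹ (X⁰·e₁) κ ((X¹ − X⁰)·ν⁰) |X⁰_α| dα + ∫₀¹ ((X¹ − X⁰)·e₁) |X¹_α| dα + ∫₀¹ (X⁰·e₁) (X¹_α·(X¹_α − X⁰_α))/|X⁰_α| dα = 0. Then (1/2) ∫_R r ρ |U|² + γ ∫₀¹ (X¹·e₁)|X¹_α| dα + 2Δt ( ∫_R μ r |D_c(U)|² + ∫_R μ r^{−1}(U·e₁)² ) ≤ (1/2) ∫_R r ρ̂ |Û|² + γ ∫₀¹ (X⁰·e₁)|X⁰_α| dα + Δt ∫_R ρ r g·U. -/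
/-!
Testing the momentum equation with the velocity and multiplying by `Δt` gives an energy balance.
Its time-difference term polarizes into the kinetic energy increment plus the nonnegative numerical
dissipation `ρ̂ |U - Û|²`. The pressure term vanishes, and the advection and curvature equations
turn the surface tension term into two curve integrals, which dominate the increment of the surface
area because `|a| - |b| ≤ a · (a - b) / |b|` for `b ≠ 0`.
-/

/-
Unconditional energy stability, local estimate (Theorem 4.1, estimate (4.10)),
with the quadratures realized as exact weighted integrals.
-/

open MeasureTheory Set

noncomputable section

/-- Squared Euclidean norm on ℝ². -/
def sqv (v : ℝ × ℝ) : ℝ := v.1 ^ 2 + v.2 ^ 2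

/-- Euclidean norm on ℝ². -/
def nrm (v : ℝ × ℝ) : ℝ := Real.sqrt (v.1 ^ 2 + v.2 ^ 2)

/-- Squared Frobenius norm of the symmetrized cylindrical gradient
`D_c(U) = (∇_c U + (∇_c U)ᵀ)/2` of a vector field `U` on the meridian halfplane. -/
def DcSq (U : ℝ × ℝ → ℝ × ℝ) (p : ℝ × ℝ) : ℝ :=
  ((fderiv ℝ U p (1, 0)).1) ^ 2 + ((fderiv ℝ U p (0, 1)).2) ^ 2
    + ((fderiv ℝ U p (1, 0)).2 + (fderiv ℝ U p (0, 1)).1) ^ 2 / 2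

/-- `∇_c·(rU) = ∂_r (r U·e₁) + ∂_z (r U·e₂)` for a vector field `U` on the
meridian halfplane, at the point `p = (r,z)`. -/
def divc (U : ℝ × ℝ → ℝ × ℝ) (p : ℝ × ℝ) : ℝ :=
  (U p).1 + p.1 * ((fderiv ℝ U p (1, 0)).1 + (fderiv ℝ U p (0, 1)).2)

open scoped InnerProductSpace

theorem dot_eq_inner_toLp (v w : ℝ × ℝ) : dot v w = ⟪WithLp.toLp 2 v, WithLp.toLp 2 w⟫_ℝ := by
  simp [dot, mul_comm]

theorem nrm_eq_norm_toLp (v : ℝ × ℝ) : nrm v = ‖WithLp.toLp 2 v‖ := by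
  simp [nrm, WithLp.prod_norm_eq_of_L2]

theorem sqv_eq_norm_toLp_sq (v : ℝ × ℝ) : sqv v = ‖WithLp.toLp 2 v‖ ^ 2 := by
  simp [sqv, WithLp.prod_norm_sq_eq_of_L2]

section KineticEnergy

variable {E : Type*} [SeminormedAddCommGroup E] [InnerProductSpace ℝ E]

theorem inner_smul_sub_smul_add_mul_inner_sub (a b : ℝ) (u w : E) :
    ⟪a • u - b • w, u⟫_ℝ + b * ⟪u - w, u⟫_ℝ = a * ‖u‖ ^ 2 - b * ‖w‖ ^ 2 + b * ‖u - w‖ ^ 2 := by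
  rw [norm_sub_sq_real, inner_sub_left, inner_sub_left, real_inner_smul_left,
    real_inner_smul_left, real_inner_self_eq_norm_sq, real_inner_comm u w]
  ring

theorem integral_kineticEnergy_sub_le {Ω : Type*} [MeasurableSpace Ω] {m : Measure Ω}
    {r ρ ρh : Ω → ℝ} {u uh : Ω → E} (hr : 0 ≤ᵐ[m] r) (hρh : 0 ≤ᵐ[m] ρh)
    (hu : Integrable (fun p => r p * (ρ p * ‖u p‖ ^ 2)) m)
    (huh : Integrable (fun p => r p * (ρh p * ‖uh p‖ ^ 2)) m)
    (hsub : Integrable (fun p => r p * (ρh p * ‖u p - uh p‖ ^ 2)) m) :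
    ∫ p, r p * (ρ p * ‖u p‖ ^ 2) ∂m - ∫ p, r p * (ρh p * ‖uh p‖ ^ 2) ∂m
      ≤ ∫ p, r p * (⟪ρ p • u p - ρh p • uh p, u p⟫_ℝ + ρh p * ⟪u p - uh p, u p⟫_ℝ) ∂m := by
  have hdissipation : 0 ≤ ∫ p, r p * (ρh p * ‖u p - uh p‖ ^ 2) ∂m := by
    refine integral_nonneg_of_ae ?_
    filter_upwards [hr, hρh] with p hrp hρhp
    exact mul_nonneg hrp (mul_nonneg hρhp (sq_nonneg _))
  have hpolarization : ∫ p, r p *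
        (⟪ρ p • u p - ρh p • uh p, u p⟫_ℝ + ρh p * ⟪u p - uh p, u p⟫_ℝ) ∂m
      = ∫ p, r p * (ρ p * ‖u p‖ ^ 2) ∂m - ∫ p, r p * (ρh p * ‖uh p‖ ^ 2) ∂m
        + ∫ p, r p * (ρh p * ‖u p - uh p‖ ^ 2) ∂m := by
    simp only [inner_smul_sub_smul_add_mul_inner_sub, mul_add, mul_sub]
    rw [integral_add (by exact hu.sub huh) hsub, integral_sub hu huh]
  linarith

end KineticEnergy

section SurfaceArea

variable {F : Type*} [NormedAddCommGroup F] [InnerProductSpace ℝ F]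

theorem norm_sub_norm_le_inner_sub_div_norm (a : F) {b : F} (hb : b ≠ 0) :
    ‖a‖ - ‖b‖ ≤ ⟪a, a - b⟫_ℝ / ‖b‖ := by
  rw [le_div_iff₀ (norm_pos_iff.2 hb), inner_sub_right, real_inner_self_eq_norm_sq]
  -- Cauchy–Schwarz reduces the claim to `0 ≤ (‖a‖ - ‖b‖) ^ 2`.
  linarith [real_inner_le_norm a b, sq_nonneg (‖a‖ - ‖b‖)]

theorem integral_areaElement_sub_le {I : Type*} [MeasurableSpace I] {σ : Measure I}
    {x₀ x₁ : I → ℝ} {τ₀ τ₁ : I → F} (hx₀ : 0 ≤ᵐ[σ] x₀) (hτ₀ : ∀ᵐ α ∂σ, τ₀ α ≠ 0)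
    (harea₀ : Integrable (fun α => x₀ α * ‖τ₀ α‖) σ)
    (harea₁ : Integrable (fun α => x₁ α * ‖τ₁ α‖) σ)
    (hradial : Integrable (fun α => (x₁ α - x₀ α) * ‖τ₁ α‖) σ)
    (hstretch : Integrable (fun α => x₀ α * ⟪τ₁ α, τ₁ α - τ₀ α⟫_ℝ / ‖τ₀ α‖) σ) :
    ∫ α, x₁ α * ‖τ₁ α‖ ∂σ - ∫ α, x₀ α * ‖τ₀ α‖ ∂σ
      ≤ ∫ α, (x₁ α - x₀ α) * ‖τ₁ α‖ ∂σ
        + ∫ α, x₀ α * ⟪τ₁ α, τ₁ α - τ₀ α⟫_ℝ / ‖τ₀ α‖ ∂σ := by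
  rw [← integral_sub harea₁ harea₀, ← integral_add hradial hstretch]
  refine integral_mono_ae (harea₁.sub harea₀) (hradial.add hstretch) ?_
  filter_upwards [hx₀, hτ₀] with α (hxα : 0 ≤ x₀ α) hτα
  calc x₁ α * ‖τ₁ α‖ - x₀ α * ‖τ₀ α‖
      = (x₁ α - x₀ α) * ‖τ₁ α‖ + x₀ α * (‖τ₁ α‖ - ‖τ₀ α‖) := by ring
    _ ≤ (x₁ α - x₀ α) * ‖τ₁ α‖ + x₀ α * (⟪τ₁ α, τ₁ α - τ₀ α⟫_ℝ / ‖τ₀ α‖) := by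
        gcongr
        exact norm_sub_norm_le_inner_sub_div_norm _ hτα
    _ = (x₁ α - x₀ α) * ‖τ₁ α‖ + x₀ α * ⟪τ₁ α, τ₁ α - τ₀ α⟫_ℝ / ‖τ₀ α‖ := by
        rw [mul_div_assoc]

end SurfaceArea

/-- In the axisymmetric setting `xᵢ = Xⁱ·e₁` and `τᵢ = Xⁱ_α`, while `D`, `S` and `W` stand for the
integrated viscous dissipation `μ (r |D_c(U)|² + r⁻¹ (U·e₁)²)`, the curvature integral
`∫ x₀ κ (v·ν⁰) |τ₀|` and the power of the body force. -/
theorem local_energy_stability_general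
    {Ω I E F : Type*} [MeasurableSpace Ω] [MeasurableSpace I]
    [SeminormedAddCommGroup E] [InnerProductSpace ℝ E]
    [NormedAddCommGroup F] [InnerProductSpace ℝ F]
    {m : Measure Ω} {σ : Measure I}
    {r ρ ρh : Ω → ℝ} {u uh : Ω → E} {x₀ x₁ : I → ℝ} {τ₀ τ₁ : I → F} {γ Δt D S W : ℝ}
    (hr : 0 ≤ᵐ[m] r) (hρh : 0 ≤ᵐ[m] ρh) (hx₀ : 0 ≤ᵐ[σ] x₀) (hτ₀ : ∀ᵐ α ∂σ, τ₀ α ≠ 0)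
    (hγ : 0 ≤ γ) (hΔt : Δt ≠ 0)
    (hu : Integrable (fun p => r p * (ρ p * ‖u p‖ ^ 2)) m)
    (huh : Integrable (fun p => r p * (ρh p * ‖uh p‖ ^ 2)) m)
    (hsub : Integrable (fun p => r p * (ρh p * ‖u p - uh p‖ ^ 2)) m)
    (harea₀ : Integrable (fun α => x₀ α * ‖τ₀ α‖) σ)
    (harea₁ : Integrable (fun α => x₁ α * ‖τ₁ α‖) σ)
    (hradial : Integrable (fun α => (x₁ α - x₀ α) * ‖τ₁ α‖) σ)
    (hstretch : Integrable (fun α => x₀ α * ⟪τ₁ α, τ₁ α - τ₀ α⟫_ℝ / ‖τ₀ α‖) σ)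
    (hmomentum : 1 / (2 * Δt) * (∫ p, r p *
        (⟪ρ p • u p - ρh p • uh p, u p⟫_ℝ + ρh p * ⟪u p - uh p, u p⟫_ℝ) ∂m)
      + 2 * D - γ * S = W)
    (hcurvature : Δt * S + ∫ α, (x₁ α - x₀ α) * ‖τ₁ α‖ ∂σ
      + ∫ α, x₀ α * ⟪τ₁ α, τ₁ α - τ₀ α⟫_ℝ / ‖τ₀ α‖ ∂σ = 0) :
    1 / 2 * ∫ p, r p * (ρ p * ‖u p‖ ^ 2) ∂m + γ * ∫ α, x₁ α * ‖τ₁ α‖ ∂σ + 2 * Δt * D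
      ≤ 1 / 2 * ∫ p, r p * (ρh p * ‖uh p‖ ^ 2) ∂m + γ * ∫ α, x₀ α * ‖τ₀ α‖ ∂σ + Δt * W := by
  have hkinetic := integral_kineticEnergy_sub_le hr hρh hu huh hsub
  set K := ∫ p, r p *
    (⟪ρ p • u p - ρh p • uh p, u p⟫_ℝ + ρh p * ⟪u p - uh p, u p⟫_ℝ) ∂m
  have hbalance : 1 / 2 * K + 2 * Δt * D - γ * (Δt * S) = Δt * W := by
    rw [← hmomentum]
    field_simp
  have harea : ∫ α, x₁ α * ‖τ₁ α‖ ∂σ - ∫ α, x₀ α * ‖τ₀ α‖ ∂σ ≤ -(Δt * S) := by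
    linarith [integral_areaElement_sub_le hx₀ hτ₀ harea₀ harea₁ hradial hstretch]
  linarith [mul_le_mul_of_nonneg_left harea hγ]

theorem local_energy_stability
    (R : Set (ℝ × ℝ)) (hR : MeasurableSet R)
    (hRhalf : R ⊆ {p : ℝ × ℝ | 0 ≤ p.1})
    (ρ ρh μ : ℝ × ℝ → ℝ)
    (hρmeas : Measurable ρ) (hρhmeas : Measurable ρh) (hμmeas : Measurable μ)
    (hρ : ∀ p ∈ R, 0 ≤ ρ p) (hρh : ∀ p ∈ R, 0 ≤ ρh p) (hμ : ∀ p ∈ R, 0 ≤ μ p)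
    (γ Δt : ℝ) (hγ : 0 < γ) (hΔt : 0 < Δt)
    (g : ℝ × ℝ → ℝ × ℝ)
    (U Uh : ℝ × ℝ → ℝ × ℝ) (hUdiff : Differentiable ℝ U) (hUhmeas : Measurable Uh)
    (P : ℝ × ℝ → ℝ)
    (X0 X0' X1 X1' : ℝ → ℝ × ℝ)
    (hPW0 : PiecewiseC1 X0 X0') (hPW1 : PiecewiseC1 X1 X1')
    (hX0pos : ∀ α ∈ Set.Icc (0:ℝ) 1, 0 ≤ (X0 α).1)
    (hX0ne : ∀ α ∈ Set.Icc (0:ℝ) 1, X0' α ≠ 0)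
    (κ : ℝ → ℝ) (v : ℝ → ℝ × ℝ)
    -- all integrals appearing below are finite:
    (hint1 : IntegrableOn (fun p => p.1 * (ρ p * sqv (U p))) R)
    (hint2 : IntegrableOn (fun p => p.1 * (ρh p * sqv (Uh p))) R)
    (hint3 : IntegrableOn (fun p => p.1 * (ρh p * sqv (U p - Uh p))) R)
    (hint4 : IntegrableOn (fun p => μ p * p.1 * DcSq U p) R)
    (hint5 : IntegrableOn (fun p => μ p * (p.1)⁻¹ * ((U p).1) ^ 2) R)
    (hint6 : IntegrableOn (fun p => P p * divc U p) R)
    (hint7 : IntegrableOn (fun p => ρ p * p.1 * dot (g p) (U p)) R)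
    (hint8 : IntervalIntegrable
      (fun α => (X0 α).1 * κ α * dot (v α) (-(perp (X0' α)))) volume 0 1)
    (hint9 : IntervalIntegrable
      (fun α => (X0 α).1 * κ α * dot (X1 α - X0 α) (-(perp (X0' α)))) volume 0 1)
    (hint10 : IntervalIntegrable
      (fun α => ((X1 α - X0 α).1) * nrm (X1' α)) volume 0 1)
    (hint11 : IntervalIntegrable
      (fun α => (X0 α).1 * dot (X1' α) (X1' α - X0' α) / nrm (X0' α)) volume 0 1)
    (hint12 : IntervalIntegrable (fun α => (X1 α).1 * nrm (X1' α)) volume 0 1)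
    (hint13 : IntervalIntegrable (fun α => (X0 α).1 * nrm (X0' α)) volume 0 1)
    -- (i): the discrete momentum equation tested with U
    (hi : (1 / (2 * Δt)) * (∫ p in R, p.1 *
            (dot (ρ p • U p - ρh p • Uh p) (U p) + ρh p * dot (U p - Uh p) (U p)))
        + 2 * (∫ p in R, μ p * p.1 * DcSq U p)
        + 2 * (∫ p in R, μ p * (p.1)⁻¹ * ((U p).1) ^ 2)
        - (∫ p in R, P p * divc U p)
        - γ * (∫ α in (0:ℝ)..1, (X0 α).1 * κ α * dot (v α) (-(perp (X0' α))))
        = ∫ p in R, ρ p * p.1 * dot (g p) (U p))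
    -- (ii): the incompressibility equation tested with P
    (hii : (∫ p in R, P p * divc U p) = 0)
    -- (iii): the interface advection equation tested with κ
    (hiii : (∫ α in (0:ℝ)..1, (X0 α).1 * κ α * dot (X1 α - X0 α) (-(perp (X0' α))))
        = Δt * ∫ α in (0:ℝ)..1, (X0 α).1 * κ α * dot (v α) (-(perp (X0' α))))
    -- (iv): the curvature equation tested with X¹ − X⁰
    (hiv : (∫ α in (0:ℝ)..1, (X0 α).1 * κ α * dot (X1 α - X0 α) (-(perp (X0' α))))
        + (∫ α in (0:ℝ)..1, ((X1 α - X0 α).1) * nrm (X1' α))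
        + (∫ α in (0:ℝ)..1, (X0 α).1 * dot (X1' α) (X1' α - X0' α) / nrm (X0' α))
        = 0) :
    (1 / 2) * (∫ p in R, p.1 * (ρ p * sqv (U p)))
        + γ * (∫ α in (0:ℝ)..1, (X1 α).1 * nrm (X1' α))
        + 2 * Δt * ((∫ p in R, μ p * p.1 * DcSq U p)
          + (∫ p in R, μ p * (p.1)⁻¹ * ((U p).1) ^ 2))
      ≤ (1 / 2) * (∫ p in R, p.1 * (ρh p * sqv (Uh p)))
        + γ * (∫ α in (0:ℝ)..1, (X0 α).1 * nrm (X0' α))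
        + Δt * ∫ p in R, ρ p * p.1 * dot (g p) (U p) := by
  have hr : ∀ᵐ p ∂volume.restrict R, 0 ≤ p.1 := ae_restrict_of_forall_mem hR hRhalf
  have hρh' : ∀ᵐ p ∂volume.restrict R, 0 ≤ ρh p := ae_restrict_of_forall_mem hR hρh
  have hx₀ : ∀ᵐ α ∂volume.restrict (Ioc (0 : ℝ) 1), 0 ≤ (X0 α).1 :=
    ae_restrict_of_forall_mem measurableSet_Ioc fun α hα => hX0pos α (Ioc_subset_Icc_self hα)
  have hτ₀ : ∀ᵐ α ∂volume.restrict (Ioc (0 : ℝ) 1), WithLp.toLp 2 (X0' α) ≠ 0 :=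
    ae_restrict_of_forall_mem measurableSet_Ioc fun α hα =>
      (WithLp.toLp_eq_zero 2).not.2 (hX0ne α (Ioc_subset_Icc_self hα))
  rw [hii, sub_zero, add_assoc, ← mul_add] at hi
  rw [hiii] at hiv
  simp only [dot_eq_inner_toLp, nrm_eq_norm_toLp, sqv_eq_norm_toLp_sq, WithLp.toLp_sub,
    WithLp.toLp_smul, Prod.fst_sub, intervalIntegral.integral_of_le zero_le_one,
    intervalIntegrable_iff_integrableOn_Ioc_of_le zero_le_one]
    at hint1 hint2 hint3 hint10 hint11 hint12 hint13 hi hiv ⊢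
  exact local_energy_stability_general hr hρh' hx₀ hτ₀ hγ.le hΔt.ne' hint1 hint2 hint3
    hint13 hint12 hint10 hint11 hi hiv
end
end

section
/- Exact volume conservation of the volume-preserving schemes (volume-conservation conclusion (4.17) of Theorem 4.2, equivalently Theorem 4.3). Let X⁰, X¹ : [0,1] → ℝ² be continuous, piecewise C¹ curves whose first components vanish at the endpoints, let Δt > 0, and let v : [0,1] → ℝ² (representing the trace of the discrete fluid velocity along X⁰), with ν⁰|X⁰_α| := −(X⁰_α)^⊥. Assume: (i) (1/Δt) ∫₀¹ (X¹ − X⁰)·f dα = ∫₀¹ (X⁰·e₁) (v·ν⁰) |X⁰_α| dα (the interface-advection equation tested with the constant function 1), and (ii) ∫₀¹ (X⁰·e₁) (v·ν⁰) |X⁰_α| dα = 0 (the weighted-flux condition delivered by the XFEM pressure test function). Then M(X¹) = M(X⁰). -/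
/-!
Join `X⁰` to `X¹` by the linear homotopy `X(t) = (1 - t) X⁰ + t X¹` and write `r = X·e₁`,
`z = X·e₂`. By the product rule,
`∂ₜ(r² z_α) = 2 r X_t·(X_α)^⊥ + ∂_α(r² z_t)`.
Integrated over `t ∈ [0,1]`, the first term is quadratic in `t`, so Simpson's rule is exact for it
and yields `-2 (X¹ - X⁰)·f`. The second one becomes an exact `α`-derivative, that of the volume of
the conical frustum generated by the segment from `X⁰(α)` to `X¹(α)`. Integrating over `α`,
`M(X¹) - M(X⁰)` is `2π ∫ (X¹ - X⁰)·f` up to the frusta at the two endpoints, which degenerate when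
the endpoints lie on the axis.
-/

/-
Exact volume conservation of the volume-preserving schemes
(conclusion (4.17) of Theorem 4.2 / Theorem 4.3): under
(i) (1/Δt) ∫₀¹ (X¹ − X⁰)·f dα = ∫₀¹ (X⁰·e₁)(v·ν⁰)|X⁰_α| dα and
(ii) ∫₀¹ (X⁰·e₁)(v·ν⁰)|X⁰_α| dα = 0,
one has M(X¹) = M(X⁰).
-/

open MeasureTheory Set

noncomputable section

open AffineMap (lineMap)

/-- Signed volume of the conical frustum obtained by revolving the segment from `p` to `q` about
the second coordinate axis; it is positive when `q` lies above `p`. It measures what the endpoints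
of a moving curve contribute to the change of the enclosed volume. -/
def frustumVolume (p q : ℝ × ℝ) : ℝ :=
  Real.pi / 3 * (q.2 - p.2) * (p.1 ^ 2 + p.1 * q.1 + q.1 ^ 2)

lemma frustumVolume_eq_zero {p q : ℝ × ℝ} (hp : p.1 = 0) (hq : q.1 = 0) :
    frustumVolume p q = 0 := by
  simp [frustumVolume, hp, hq]

lemma integral_lineMap_mul_lineMap_eq_simpson (a b c d : ℝ) :
    ∫ t in (0 : ℝ)..1, lineMap a b t * lineMap c d t =
      (a * c + 4 * ((a + b) / 2 * ((c + d) / 2)) + b * d) / 6 := by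
  have hpoly (t : ℝ) : lineMap a b t * lineMap c d t =
      a * c + (a * (d - c) + (b - a) * c) * t + (b - a) * (d - c) * t ^ 2 := by
    simp only [AffineMap.lineMap_apply_ring']
    ring
  have integrable {f : ℝ → ℝ} (hf : Continuous f) : IntervalIntegrable f volume 0 1 :=
    hf.intervalIntegrable 0 1
  calc ∫ t in (0 : ℝ)..1, lineMap a b t * lineMap c d t
      = a * c + (a * (d - c) + (b - a) * c) * (∫ t in (0 : ℝ)..1, t) +
          (b - a) * (d - c) * ∫ t in (0 : ℝ)..1, t ^ 2 := by
        simp only [hpoly]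
        rw [intervalIntegral.integral_add (integrable (by fun_prop)) (integrable (by fun_prop)),
          intervalIntegral.integral_add (integrable (by fun_prop)) (integrable (by fun_prop)),
          intervalIntegral.integral_const_mul, intervalIntegral.integral_const_mul]
        simp
    _ = (a * c + 4 * ((a + b) / 2 * ((c + d) / 2)) + b * d) / 6 := by
        rw [integral_id, integral_pow]
        push_cast
        ring

lemma dot_perp_lineMap (u p q : ℝ × ℝ) (t : ℝ) :
    dot u (perp (lineMap p q t)) = lineMap (dot u (perp p)) (dot u (perp q)) t := by
  simp only [dot, perp, AffineMap.lineMap_apply_module, Prod.fst_add, Prod.snd_add,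
    Prod.smul_fst, Prod.smul_snd, smul_eq_mul]
  ring

lemma dot_fwt_eq_integral (X0 X0' X1 X1' : ℝ → ℝ × ℝ) (α : ℝ) :
    dot (X1 α - X0 α) (fwt X0 X0' X1 X1' α) =
      -∫ t in (0 : ℝ)..1, lineMap (X0 α).1 (X1 α).1 t *
        dot (X1 α - X0 α) (perp (lineMap (X0' α) (X1' α) t)) := by
  simp only [dot_perp_lineMap, integral_lineMap_mul_lineMap_eq_simpson]
  simp only [dot, fwt, perp, Prod.fst_add, Prod.snd_add, Prod.fst_sub, Prod.snd_sub,
    Prod.smul_fst, Prod.smul_snd, smul_eq_mul]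
  ring

section Homotopy

variable (p q p' q' : ℝ × ℝ)

lemma hasDerivAt_lineMap_sq_mul_lineMap (t : ℝ) :
    HasDerivAt (fun t ↦ (lineMap p.1 q.1 t) ^ 2 * lineMap p'.2 q'.2 t)
      (2 * (lineMap p.1 q.1 t * dot (q - p) (perp (lineMap p' q' t))) +
        (2 * (q.2 - p.2) * (lineMap p.1 q.1 t * lineMap p'.1 q'.1 t) +
          (q'.2 - p'.2) * (lineMap p.1 q.1 t * lineMap p.1 q.1 t))) t := by
  have hr : HasDerivAt (lineMap p.1 q.1) (q.1 - p.1) t := AffineMap.hasDerivAt_lineMap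
  have hz' : HasDerivAt (lineMap p'.2 q'.2) (q'.2 - p'.2) t := AffineMap.hasDerivAt_lineMap
  refine ((hr.fun_pow 2).fun_mul hz').congr_deriv ?_
  simp only [dot, perp, Prod.fst_sub, Prod.snd_sub, AffineMap.fst_lineMap, AffineMap.snd_lineMap]
  push_cast
  ring

lemma sq_mul_sub_sq_mul_eq_integral :
    q.1 ^ 2 * q'.2 - p.1 ^ 2 * p'.2 =
      2 * (∫ t in (0 : ℝ)..1, lineMap p.1 q.1 t * dot (q - p) (perp (lineMap p' q' t))) +
      (2 * (q.2 - p.2) * (∫ t in (0 : ℝ)..1, lineMap p.1 q.1 t * lineMap p'.1 q'.1 t) +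
        (q'.2 - p'.2) * ∫ t in (0 : ℝ)..1, lineMap p.1 q.1 t * lineMap p.1 q.1 t) := by
  have integrable_mul (a b c d : ℝ) :
      IntervalIntegrable (fun t : ℝ ↦ lineMap a b t * lineMap c d t) volume 0 1 :=
    (AffineMap.lineMap_continuous.mul AffineMap.lineMap_continuous).intervalIntegrable 0 1
  have integrable_normal : IntervalIntegrable
      (fun t : ℝ ↦ lineMap p.1 q.1 t * dot (q - p) (perp (lineMap p' q' t))) volume 0 1 := by
    simpa only [dot_perp_lineMap] using integrable_mul _ _ _ _
  have integrable_radius := (integrable_mul p.1 q.1 p'.1 q'.1).const_mul (2 * (q.2 - p.2))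
  have integrable_height := (integrable_mul p.1 q.1 p.1 q.1).const_mul (q'.2 - p'.2)
  have ftc := intervalIntegral.integral_eq_sub_of_hasDerivAt
    (fun t _ ↦ hasDerivAt_lineMap_sq_mul_lineMap p q p' q' t)
    ((integrable_normal.const_mul 2).add (integrable_radius.add integrable_height))
  rw [intervalIntegral.integral_add (integrable_normal.const_mul 2)
      (integrable_radius.add integrable_height),
    intervalIntegral.integral_add integrable_radius integrable_height] at ftc
  simpa only [intervalIntegral.integral_const_mul, AffineMap.lineMap_apply_zero,
    AffineMap.lineMap_apply_one] using ftc.symm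

end Homotopy

section FrustumDerivative

variable {X0 X0' X1 X1' : ℝ → ℝ × ℝ} {α : ℝ}

lemma hasDerivAt_frustumVolume_integral
    (h0 : HasDerivAt X0 (X0' α) α) (h1 : HasDerivAt X1 (X1' α) α) :
    HasDerivAt (fun β ↦ frustumVolume (X0 β) (X1 β))
      (Real.pi * (2 * ((X1 α).2 - (X0 α).2) *
          (∫ t in (0 : ℝ)..1, lineMap (X0 α).1 (X1 α).1 t * lineMap (X0' α).1 (X1' α).1 t) +
        ((X1' α).2 - (X0' α).2) *
          ∫ t in (0 : ℝ)..1, lineMap (X0 α).1 (X1 α).1 t * lineMap (X0 α).1 (X1 α).1 t)) α := by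
  have hr0 : HasDerivAt (fun β ↦ (X0 β).1) (X0' α).1 α := h0.fst
  have hr1 : HasDerivAt (fun β ↦ (X1 β).1) (X1' α).1 α := h1.fst
  have hz0 : HasDerivAt (fun β ↦ (X0 β).2) (X0' α).2 α := h0.snd
  have hz1 : HasDerivAt (fun β ↦ (X1 β).2) (X1' α).2 α := h1.snd
  refine (((hz1.fun_sub hz0).const_mul (Real.pi / 3)).fun_mul
    (((hr0.fun_pow 2).fun_add (hr0.fun_mul hr1)).fun_add (hr1.fun_pow 2))).congr_deriv ?_
  simp only [integral_lineMap_mul_lineMap_eq_simpson]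
  push_cast
  ring

lemma hasDerivAt_frustumVolume
    (h0 : HasDerivAt X0 (X0' α) α) (h1 : HasDerivAt X1 (X1' α) α) :
    HasDerivAt (fun β ↦ frustumVolume (X0 β) (X1 β))
      (Real.pi * ((X1 α).1 ^ 2 * (X1' α).2 - (X0 α).1 ^ 2 * (X0' α).2) +
        2 * Real.pi * dot (X1 α - X0 α) (fwt X0 X0' X1 X1' α)) α := by
  refine (hasDerivAt_frustumVolume_integral h0 h1).congr_deriv ?_
  rw [sq_mul_sub_sq_mul_eq_integral, dot_fwt_eq_integral]
  ring

end FrustumDerivative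

section Integrability

variable {f g : ℝ → ℝ × ℝ} {μ : Measure ℝ} {a b : ℝ}

lemma intervalIntegrable_fst (hg : IntervalIntegrable g μ a b) :
    IntervalIntegrable (fun x ↦ (g x).1) μ a b :=
  ⟨hg.1.fst, hg.2.fst⟩

lemma intervalIntegrable_snd (hg : IntervalIntegrable g μ a b) :
    IntervalIntegrable (fun x ↦ (g x).2) μ a b :=
  ⟨hg.1.snd, hg.2.snd⟩

lemma intervalIntegrable_perp (hg : IntervalIntegrable g μ a b) :
    IntervalIntegrable (fun x ↦ perp (g x)) μ a b :=
  ⟨hg.1.snd.prodMk hg.1.fst.neg, hg.2.snd.prodMk hg.2.fst.neg⟩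

lemma intervalIntegrable_dot (hf : ContinuousOn f (uIcc a b)) (hg : IntervalIntegrable g μ a b) :
    IntervalIntegrable (fun x ↦ dot (f x) (g x)) μ a b :=
  ((intervalIntegrable_fst hg).continuousOn_mul hf.fst).add
    ((intervalIntegrable_snd hg).continuousOn_mul hf.snd)

end Integrability

namespace PiecewiseC1

variable {X X' X0 X0' X1 X1' : ℝ → ℝ × ℝ}

lemma continuousOn_uIcc (h : PiecewiseC1 X X') : ContinuousOn X (uIcc 0 1) := by
  simpa only [uIcc_of_le zero_le_one] using h.cont

lemma intervalIntegrable_sq_mul (h : PiecewiseC1 X X') :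
    IntervalIntegrable (fun α ↦ (X α).1 ^ 2 * (X' α).2) volume 0 1 :=
  (intervalIntegrable_snd h.integrable).continuousOn_mul (h.continuousOn_uIcc.fst.pow 2)

lemma intervalIntegrable_fwt (h0 : PiecewiseC1 X0 X0') (h1 : PiecewiseC1 X1 X1') :
    IntervalIntegrable (fwt X0 X0' X1 X1') volume 0 1 := by
  have h0c := h0.continuousOn_uIcc
  have h1c := h1.continuousOn_uIcc
  have hmid := ((h0.integrable.add h1.integrable).smul (1 / 2 : ℝ)).continuousOn_smul
    ((h0c.add h1c).const_smul (1 / 2 : ℝ)).fst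
  exact (intervalIntegrable_perp (((h0.integrable.continuousOn_smul h0c.fst).add
    (hmid.smul (4 : ℝ))).add (h1.integrable.continuousOn_smul h1c.fst))).smul (-(1 / 6) : ℝ)

lemma intervalIntegrable_dot_fwt (h0 : PiecewiseC1 X0 X0') (h1 : PiecewiseC1 X1 X1') :
    IntervalIntegrable (fun α ↦ dot (X1 α - X0 α) (fwt X0 X0' X1 X1' α)) volume 0 1 :=
  intervalIntegrable_dot (h1.continuousOn_uIcc.sub h0.continuousOn_uIcc)
    (h0.intervalIntegrable_fwt h1)

lemma exists_finset_hasDerivAt_pair (h0 : PiecewiseC1 X0 X0') (h1 : PiecewiseC1 X1 X1') :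
    ∃ s : Finset ℝ, ∀ α ∈ Icc (0 : ℝ) 1 \ (s : Set ℝ),
      HasDerivAt X0 (X0' α) α ∧ HasDerivAt X1 (X1' α) α := by
  classical
  obtain ⟨s0, hs0⟩ := h0.hasDeriv
  obtain ⟨s1, hs1⟩ := h1.hasDeriv
  refine ⟨s0 ∪ s1, fun α hα ↦ ?_⟩
  simp only [Finset.coe_union, mem_sdiff, mem_union, not_or] at hα
  exact ⟨hs0 α ⟨hα.1, hα.2.1⟩, hs1 α ⟨hα.1, hα.2.2⟩⟩

end PiecewiseC1

theorem Mvol_sub_Mvol {X0 X0' X1 X1' : ℝ → ℝ × ℝ}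
    (h0 : PiecewiseC1 X0 X0') (h1 : PiecewiseC1 X1 X1') :
    Mvol X1 X1' - Mvol X0 X0' =
      2 * Real.pi * (∫ α in (0 : ℝ)..1, dot (X1 α - X0 α) (fwt X0 X0' X1 X1' α)) -
        (frustumVolume (X0 1) (X1 1) - frustumVolume (X0 0) (X1 0)) := by
  obtain ⟨s, hs⟩ := h0.exists_finset_hasDerivAt_pair h1
  have h0c := h0.cont
  have h1c := h1.cont
  have density_integrable := h1.intervalIntegrable_sq_mul.sub h0.intervalIntegrable_sq_mul
  have dot_integrable := h0.intervalIntegrable_dot_fwt h1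
  have ftc := integral_eq_of_hasDerivAt_off_countable_of_le
    (fun α ↦ frustumVolume (X0 α) (X1 α)) _ zero_le_one s.countable_toSet
    (by unfold frustumVolume; fun_prop)
    (fun α hα ↦
      have hderiv := hs α ⟨Ioo_subset_Icc_self hα.1, hα.2⟩
      hasDerivAt_frustumVolume hderiv.1 hderiv.2)
    ((density_integrable.const_mul Real.pi).add (dot_integrable.const_mul (2 * Real.pi)))
  rw [intervalIntegral.integral_add (density_integrable.const_mul _) (dot_integrable.const_mul _),
    intervalIntegral.integral_const_mul, intervalIntegral.integral_const_mul,
    intervalIntegral.integral_sub h1.intervalIntegrable_sq_mul h0.intervalIntegrable_sq_mul] at ftc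
  unfold Mvol
  linarith

theorem exact_volume_conservation_general
    {X0 X0' X1 X1' : ℝ → ℝ × ℝ}
    (h0 : PiecewiseC1 X0 X0') (h1 : PiecewiseC1 X1 X1')
    (hend : frustumVolume (X0 0) (X1 0) = frustumVolume (X0 1) (X1 1))
    {Δt : ℝ} (hΔt : Δt ≠ 0) {v : ℝ → ℝ × ℝ}
    (hadv : (1 / Δt) * (∫ α in (0 : ℝ)..1, dot (X1 α - X0 α) (fwt X0 X0' X1 X1' α))
      = ∫ α in (0 : ℝ)..1, (X0 α).1 * dot (v α) (-(perp (X0' α))))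
    (hflux : (∫ α in (0 : ℝ)..1, (X0 α).1 * dot (v α) (-(perp (X0' α)))) = 0) :
    Mvol X1 X1' = Mvol X0 X0' := by
  have hzero : ∫ α in (0 : ℝ)..1, dot (X1 α - X0 α) (fwt X0 X0' X1 X1' α) = 0 :=
    (mul_eq_zero.mp (hadv.trans hflux)).resolve_left (one_div_ne_zero hΔt)
  rw [← sub_eq_zero, Mvol_sub_Mvol h0 h1, hzero, hend]
  ring

theorem exact_volume_conservation
    (X0 X0' X1 X1' : ℝ → ℝ × ℝ)
    (h0 : PiecewiseC1 X0 X0') (h1 : PiecewiseC1 X1 X1')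
    (hend : ∀ α ∈ ({0, 1} : Set ℝ), (X0 α).1 = 0 ∧ (X1 α).1 = 0)
    (Δt : ℝ) (hΔt : 0 < Δt) (v : ℝ → ℝ × ℝ)
    (hadv : (1 / Δt) * (∫ α in (0:ℝ)..1, dot (X1 α - X0 α) (fwt X0 X0' X1 X1' α))
      = ∫ α in (0:ℝ)..1, (X0 α).1 * dot (v α) (-(perp (X0' α))))
    (hflux : (∫ α in (0:ℝ)..1, (X0 α).1 * dot (v α) (-(perp (X0' α)))) = 0) :
    Mvol X1 X1' = Mvol X0 X0' := by
  have hfrustum (α : ℝ) (hα : α ∈ ({0, 1} : Set ℝ)) : frustumVolume (X0 α) (X1 α) = 0 :=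
    frustumVolume_eq_zero (hend α hα).1 (hend α hα).2
  exact exact_volume_conservation_general h0 h1
    ((hfrustum 0 (by simp)).trans (hfrustum 1 (by simp)).symm) hΔt.ne' hadv hflux
end
end
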